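/- Let F be an algebraically closed field with characteristic ≠ 2, and let b ∈ F with b² ≠ 1. Then the automorphism group of the algebra E1(b,b) with MSC [[1,0,0,b],[b,0,0,1]] is Aut(E1(b,b)) = {I, [[0,1],[1,0]]}. -/

import Mathlib

open Matrix Kronecker

variable {F : Type*}

/-- The Kronecker (tensor) product of two `2 × 2` matrices, realized as a `4 × 4` matrix;
rows/columns are indexed in row-major order by the pairs `(1,1), (1,2), (2,1), (2,2)`. -/
def kron [CommRing F] (g h : Matrix (Fin 2) (Fin 2) F) : Matrix (Fin 4) (Fin 4) F :=
  Matrix.reindex finProdFinEquiv finProdFinEquiv (g ⊗ₖ h)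

/-- Two `2`-dimensional algebras given by matrices of structure constants `A, B`
are isomorphic iff `B = g · A · (g⁻¹ ⊗ g⁻¹)` for some `g ∈ GL(2, F)`. -/
def Isomorphic [Field F] (A B : Matrix (Fin 2) (Fin 4) F) : Prop :=
  ∃ g : GL (Fin 2) F,
    B = (g : Matrix (Fin 2) (Fin 2) F) * A *
        kron ((↑(g⁻¹) : Matrix (Fin 2) (Fin 2) F)) ((↑(g⁻¹) : Matrix (Fin 2) (Fin 2) F))

/-- The automorphism group of the algebra with MSC `E`, as a set of (invertible) `2 × 2`
matrices: `Aut(E) = {g ∈ GL(2,F) : g·E = E·(g ⊗ g)}`. -/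
def Aut [Field F] (E : Matrix (Fin 2) (Fin 4) F) : Set (Matrix (Fin 2) (Fin 2) F) :=
  {g | IsUnit g ∧ g * E = E * kron g g}

/-- The derivation algebra of the algebra with MSC `E`:
`Der(E) = { D : E·(D ⊗ I + I ⊗ D) = D·E }`. -/
def Der [Field F] (E : Matrix (Fin 2) (Fin 4) F) : Set (Matrix (Fin 2) (Fin 2) F) :=
  {D | E * (kron D 1 + kron 1 D) = D * E}

/-!
The matrix of structure constants factors: the product of `E₁(b, b)` is `u · v = M (u * v)`, where
`u * v` is the coordinatewise product and `M = !![1, b; b, 1]`, which is invertible since `b² ≠ 1`.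
The relations `M (eⱼ * eₖ) = 0` for `j ≠ k` force the columns of an automorphism to have disjoint
supports, so it is a monomial matrix, and comparing `g (M eⱼ)` with `M (g eⱼ * g eⱼ)` at the nonzero
entry of `g eⱼ` turns that entry into a nonzero idempotent, because `M` has unit diagonal. Hence the
automorphisms are the permutation matrices commuting with `M`.
-/

open Equiv (Perm)

section PermutationMatrices

variable {ι R : Type*} [Fintype ι] [DecidableEq ι]

theorem isUnit_permMatrix [Semiring R] (σ : Perm ι) : IsUnit (σ.permMatrix R) := by
  simpa only [permMatrixHom_apply, inv_inv] using
    (Group.isUnit σ⁻¹).map (permMatrixHom (n := ι) (R := R))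

theorem exists_perm_forall_ne_zero_iff [CommRing R] [IsDomain R] {g : Matrix ι ι R}
    (hg : IsUnit g) (hrow : ∀ i j k, j ≠ k → g i j * g i k = 0) :
    ∃ σ : Perm ι, ∀ i j, g i j ≠ 0 ↔ σ i = j := by
  have hdet : g.det ≠ 0 := ((isUnit_iff_isUnit_det g).1 hg).ne_zero
  have exists_in_row (i : ι) : ∃ j, g i j ≠ 0 := by
    by_contra! h
    exact hdet (det_eq_zero_of_row_eq_zero i h)
  have exists_in_col (j : ι) : ∃ i, g i j ≠ 0 := by
    by_contra! h
    exact hdet (det_eq_zero_of_column_eq_zero j h)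
  choose f hf using exists_in_row
  have ne_zero_iff (i j : ι) : g i j ≠ 0 ↔ f i = j := by
    refine ⟨fun hij ↦ ?_, fun h ↦ h ▸ hf i⟩
    by_contra hne
    exact mul_ne_zero (hf i) hij (hrow i _ _ hne)
  have hsurj : f.Surjective := fun j ↦ (exists_in_col j).imp fun i hi ↦ (ne_zero_iff i j).1 hi
  exact ⟨Equiv.ofBijective f hsurj.bijective_of_finite, ne_zero_iff⟩

theorem permMatrix_swap_fin_two [Zero R] [One R] :
    (Equiv.swap 0 1 : Perm (Fin 2)).permMatrix R = !![0, 1; 1, 0] := by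
  ext i j
  fin_cases i <;> fin_cases j <;> simp [PEquiv.toMatrix_apply]

theorem permMatrix_fin_two_eq_or [Zero R] [One R] (σ : Perm (Fin 2)) :
    σ.permMatrix R = 1 ∨ σ.permMatrix R = !![0, 1; 1, 0] := by
  have hσ : σ = 1 ∨ σ = Equiv.swap 0 1 := by decide +revert
  rcases hσ with rfl | rfl
  · exact .inl permMatrix_one
  · exact .inr permMatrix_swap_fin_two

end PermutationMatrices

section TwistedProduct

variable {ι R : Type*} [Fintype ι] [CommRing R]

/-- `g` is an endomorphism of the algebra on `ι → R` whose product is the coordinatewise product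
twisted by `M`, that is `(u, v) ↦ M *ᵥ (u * v)`. -/
def IsTwistedMulHom (M g : Matrix ι ι R) : Prop :=
  ∀ u v : ι → R, g *ᵥ (M *ᵥ (u * v)) = M *ᵥ ((g *ᵥ u) * (g *ᵥ v))

namespace IsTwistedMulHom

variable {M g : Matrix ι ι R}

theorem mul_eq_mul_hadamard (h : IsTwistedMulHom M g) : g * M = M * (g ⊙ g) := by
  classical
  refine ext_of_mulVec_single fun j ↦ ?_
  have hj := h (Pi.single j 1) (Pi.single j 1)
  have hcol : (g ⊙ g).col j = g.col j * g.col j := rfl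
  rw [← Pi.single_mul, one_mul, mulVec_single_one g j] at hj
  rw [← mulVec_mulVec, ← mulVec_mulVec, hj, mulVec_single_one (g ⊙ g) j, hcol]

variable [DecidableEq ι]

theorem apply_mul_apply_eq_zero (h : IsTwistedMulHom M g) (hM : IsUnit M) (i : ι) {j k : ι}
    (hjk : j ≠ k) : g i j * g i k = 0 := by
  have hmul : (Pi.single j 1 * Pi.single k 1 : ι → R) = 0 := by
    rw [← Pi.single_mul_left, Pi.single_eq_of_ne hjk, mul_zero, Pi.single_zero]
  have hcol : M *ᵥ (g.col j * g.col k) = M *ᵥ 0 := by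
    rw [← mulVec_single_one g j, ← mulVec_single_one g k, ← h,
      hmul, mulVec_zero, mulVec_zero]
  exact congrFun (mulVec_injective_of_isUnit hM hcol) i

theorem exists_eq_permMatrix [IsDomain R] (h : IsTwistedMulHom M g) (hM : IsUnit M)
    (hdiag : ∀ i, M i i = 1) (hg : IsUnit g) : ∃ σ : Perm ι, g = σ.permMatrix R := by
  obtain ⟨σ, hσ⟩ :=
    exists_perm_forall_ne_zero_iff hg fun i _ _ hjk ↦ h.apply_mul_apply_eq_zero hM i hjk
  have off_support {i j : ι} (hij : σ i ≠ j) : g i j = 0 := not_not.1 ((hσ i j).not.2 hij)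
  have on_support (i : ι) : g i (σ i) = 1 := by
    have hleft : (g * M) i (σ i) = g i (σ i) := by
      rw [mul_apply, Fintype.sum_eq_single (σ i), hdiag, mul_one]
      intro j hj
      rw [off_support hj.symm, zero_mul]
    have hright : (M * (g ⊙ g)) i (σ i) = g i (σ i) * g i (σ i) := by
      rw [mul_apply, Fintype.sum_eq_single i, hdiag, one_mul, hadamard_apply]
      intro j hj
      rw [hadamard_apply, off_support (σ.injective.ne hj), mul_zero, mul_zero]
    have hidem : g i (σ i) * g i (σ i) = g i (σ i) := by
      rw [← hright, ← h.mul_eq_mul_hadamard, hleft]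
    exact (mul_eq_left₀ ((hσ i _).2 rfl)).1 hidem
  refine ⟨σ, ?_⟩
  ext i j
  rw [Perm.permMatrix, congrFun (PEquiv.toMatrix_toPEquiv_apply σ i) j]
  rcases eq_or_ne (σ i) j with rfl | hij
  · rw [on_support, Pi.single_eq_same]
  · rw [off_support hij, Pi.single_eq_of_ne hij.symm]

end IsTwistedMulHom

theorem isTwistedMulHom_permMatrix_iff [DecidableEq ι] {M : Matrix ι ι R} {σ : Perm ι} :
    IsTwistedMulHom M (σ.permMatrix R) ↔ Commute (σ.permMatrix R) M := by
  have map_mul (u v : ι → R) :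
      σ.permMatrix R *ᵥ (u * v) = (σ.permMatrix R *ᵥ u) * (σ.permMatrix R *ᵥ v) := by
    simp only [permMatrix_mulVec]
    rfl
  simp only [IsTwistedMulHom, ← map_mul, mulVec_mulVec]
  refine ⟨fun h ↦ mulVec_injective (funext fun u ↦ ?_), fun h u v ↦ by rw [h.eq]⟩
  simpa only [mul_one] using h u 1

theorem isUnit_and_isTwistedMulHom_iff [DecidableEq ι] [IsDomain R] {M g : Matrix ι ι R}
    (hM : IsUnit M) (hdiag : ∀ i, M i i = 1) :
    IsUnit g ∧ IsTwistedMulHom M g ↔ ∃ σ : Perm ι, g = σ.permMatrix R ∧ Commute g M := by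
  constructor
  · rintro ⟨hg, h⟩
    obtain ⟨σ, rfl⟩ := h.exists_eq_permMatrix hM hdiag hg
    exact ⟨σ, rfl, isTwistedMulHom_permMatrix_iff.1 h⟩
  · rintro ⟨σ, rfl, hcomm⟩
    exact ⟨isUnit_permMatrix σ, isTwistedMulHom_permMatrix_iff.2 hcomm⟩

end TwistedProduct

section StructureConstants

variable {R : Type*} [CommRing R]

/-- The tensor product `u ⊗ v` of two vectors, in the row-major coordinates used by `kron`, so that
`E *ᵥ tensorVec u v` is the product of `u` and `v` in the algebra with MSC `E`. -/
def tensorVec (u v : Fin 2 → R) : Fin 4 → R :=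
  fun k ↦ u ((finProdFinEquiv (m := 2) (n := 2)).symm k).1 *
    v ((finProdFinEquiv (m := 2) (n := 2)).symm k).2

theorem kron_mulVec_tensorVec (g h : Matrix (Fin 2) (Fin 2) R) (u v : Fin 2 → R) :
    kron g h *ᵥ tensorVec u v = tensorVec (g *ᵥ u) (h *ᵥ v) := by
  ext k
  simp only [mulVec, dotProduct, tensorVec, kron, reindex_apply, submatrix_apply,
    kroneckerMap_apply, Fintype.sum_mul_sum, ← Fintype.sum_prod_type']
  exact Fintype.sum_equiv (finProdFinEquiv (m := 2) (n := 2)).symm _ _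
    fun _ ↦ mul_mul_mul_comm ..

theorem tensorVec_single (i j : Fin 2) :
    tensorVec (Pi.single i (1 : R)) (Pi.single j 1) = Pi.single (finProdFinEquiv (i, j)) 1 := by
  ext k
  obtain ⟨⟨a, b⟩, rfl⟩ := (finProdFinEquiv (m := 2) (n := 2)).surjective k
  simp only [tensorVec, Equiv.symm_apply_apply, Pi.single_apply, EmbeddingLike.apply_eq_iff_eq,
    Prod.mk.injEq, ite_zero_mul_ite_zero, mul_one]

theorem ext_of_mulVec_tensorVec {m : Type*} {A B : Matrix m (Fin 4) R}
    (h : ∀ u v, A *ᵥ tensorVec u v = B *ᵥ tensorVec u v) : A = B := by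
  refine ext_of_mulVec_single fun k ↦ ?_
  obtain ⟨⟨i, j⟩, rfl⟩ := (finProdFinEquiv (m := 2) (n := 2)).surjective k
  rw [← tensorVec_single]
  exact h _ _

theorem mem_Aut_iff [Field F] {E : Matrix (Fin 2) (Fin 4) F} {g : Matrix (Fin 2) (Fin 2) F} :
    g ∈ Aut E ↔ IsUnit g ∧
      ∀ u v, g *ᵥ (E *ᵥ tensorVec u v) = E *ᵥ tensorVec (g *ᵥ u) (g *ᵥ v) := by
  simp only [← kron_mulVec_tensorVec, mulVec_mulVec]
  exact and_congr_right' ⟨fun h u v ↦ by rw [h], ext_of_mulVec_tensorVec⟩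

theorem E1_mulVec_tensorVec (b : R) (u v : Fin 2 → R) :
    (!![1, 0, 0, b; b, 0, 0, 1] : Matrix (Fin 2) (Fin 4) R) *ᵥ tensorVec u v =
      !![1, b; b, 1] *ᵥ (u * v) := by
  have h₀ : (finProdFinEquiv.symm (0 : Fin 4) : Fin 2 × Fin 2) = (0, 0) := by decide
  have h₃ : (finProdFinEquiv.symm (3 : Fin 4) : Fin 2 × Fin 2) = (1, 1) := by decide
  ext i
  fin_cases i <;>
    simp [-finProdFinEquiv_symm_apply, mulVec, dotProduct, Fin.sum_univ_four, tensorVec, h₀, h₃]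

end StructureConstants

theorem aut_E1_diag_general [Field F] (b : F) (hb : b ^ 2 ≠ 1) :
    Aut (!![1, 0, 0, b; b, 0, 0, 1] : Matrix (Fin 2) (Fin 4) F) =
      {1, !![0, 1; 1, 0]} := by
  have hM : IsUnit !![1, b; b, 1] := by
    rw [isUnit_iff_isUnit_det, det_fin_two_of, isUnit_iff_ne_zero, one_mul, ← sq]
    exact sub_ne_zero.2 hb.symm
  have hdiag : ∀ i, !![1, b; b, 1] i i = 1 := by simp [Fin.forall_fin_two]
  ext g
  rw [mem_Aut_iff]
  simp only [E1_mulVec_tensorVec]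
  refine (isUnit_and_isTwistedMulHom_iff hM hdiag).trans ⟨?_, ?_⟩
  · rintro ⟨σ, rfl, -⟩
    exact permMatrix_fin_two_eq_or σ
  · rintro (rfl | rfl)
    · exact ⟨1, permMatrix_one.symm, Commute.one_left _⟩
    · exact ⟨Equiv.swap 0 1, permMatrix_swap_fin_two.symm, by simp [Commute, SemiconjBy]⟩

theorem aut_E1_diag (F : Type*) [Field F] [IsAlgClosed F] (hchar : ringChar F ≠ 2)
    (b : F) (hb : b ^ 2 ≠ 1) :
    Aut (!![1, 0, 0, b; b, 0, 0, 1] : Matrix (Fin 2) (Fin 4) F) =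
      {1, !![0, 1; 1, 0]} :=
  aut_E1_diag_general b hb
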